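/- Let n ≥ 1 and let f_i : ℝ^d → ℝ, i ∈ {1,…,n}, be twice continuously differentiable and μ-strongly convex (μ > 0), with ‖∇²f_i(x) − ∇²f_i(y)‖ ≤ H‖x − y‖ (spectral norm) and ‖∇²f_i(x) − ∇²f_i(y)‖_F ≤ H₁‖x − y‖ for all x, y. Let f := (1/n)Σ_i f_i and let x* satisfy ∇f(x*) = 0. Given points w_i, z_i ∈ ℝ^d and symmetric matrices P_i ∈ ℝ^{d×d}, set l_i := ‖P_i − ∇²f_i(z_i)‖_F and g_i := (P_i + l_i I)w_i − ∇f_i(w_i). Then M := (1/n)Σ_i (P_i + l_i I) satisfies M ⪰ μI (so it is invertible), and the point x⁺ := M⁻¹ ((1/n)Σ_i g_i) satisfies ‖x⁺ − x*‖² ≤ (3H²/(4μ²)) 𝒲² + (12/μ²)·( (1/n)Σ_i ‖P_i − ∇²f_i(x*)‖_F² )·𝒲 + (3H₁²/μ²) 𝒵 𝒲, where 𝒲 := (1/n)Σ_i ‖w_i − x*‖² and 𝒵 := (1/n)Σ_i ‖z_i − x*‖². -/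

import Mathlib

open Matrix

/-- Frobenius norm squared: sum of squares of all entries. -/
noncomputable def frobSq {d : ℕ} (M : Matrix (Fin d) (Fin d) ℝ) : ℝ :=
  ∑ i, ∑ j, (M i j) ^ 2

/-- Frobenius norm. -/
noncomputable def frobNorm {d : ℕ} (M : Matrix (Fin d) (Fin d) ℝ) : ℝ :=
  Real.sqrt (frobSq M)

/-- Spectral norm (operator 2-norm) of a matrix. -/
noncomputable def specNorm {d : ℕ} (M : Matrix (Fin d) (Fin d) ℝ) : ℝ :=
  ‖Matrix.toEuclideanCLM (𝕜 := ℝ) M‖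

/-- The Hessian matrix of `f` at `x` (the derivative of the gradient). -/
noncomputable def hess {d : ℕ} (f : EuclideanSpace ℝ (Fin d) → ℝ)
    (x : EuclideanSpace ℝ (Fin d)) : Matrix (Fin d) (Fin d) ℝ :=
  fun j l => fderiv ℝ (gradient f) x (EuclideanSpace.single l 1) j

lemma frobNorm_eq_lp {d : ℕ} (M : Matrix (Fin d) (Fin d) ℝ) :
    frobNorm M = ‖(WithLp.toLp 2 (fun p : Fin d × Fin d => M p.1 p.2) :
      EuclideanSpace ℝ (Fin d × Fin d))‖ := by
  rw [EuclideanSpace.norm_eq, frobNorm, frobSq]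
  congr 1
  simp [Fintype.sum_prod_type]

lemma frobNorm_triangle {d : ℕ} (A B : Matrix (Fin d) (Fin d) ℝ) :
    frobNorm (A + B) ≤ frobNorm A + frobNorm B := by
  simp only [frobNorm_eq_lp]
  exact norm_add_le (WithLp.toLp 2 (fun p : Fin d × Fin d => A p.1 p.2) :
      EuclideanSpace ℝ (Fin d × Fin d)) (WithLp.toLp 2 (fun p : Fin d × Fin d => B p.1 p.2))

lemma frobSq_nn {d : ℕ} (A : Matrix (Fin d) (Fin d) ℝ) : 0 ≤ frobSq A :=
  Finset.sum_nonneg fun _ _ => Finset.sum_nonneg fun _ _ => sq_nonneg _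

lemma frobNorm_nn {d : ℕ} (A : Matrix (Fin d) (Fin d) ℝ) : 0 ≤ frobNorm A := Real.sqrt_nonneg _

lemma frobNorm_pow {d : ℕ} (A : Matrix (Fin d) (Fin d) ℝ) : frobNorm A ^ 2 = frobSq A :=
  Real.sq_sqrt (frobSq_nn A)

lemma norm_apply_le_frob {d : ℕ} (A : Matrix (Fin d) (Fin d) ℝ) (x : EuclideanSpace ℝ (Fin d)) :
    ‖Matrix.toEuclideanCLM (𝕜 := ℝ) A x‖ ≤ frobNorm A * ‖x‖ := by
  apply le_of_sq_le_sq _ (mul_nonneg (frobNorm_nn A) (norm_nonneg x))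
  rw [mul_pow, frobNorm_pow, EuclideanSpace.norm_sq_eq, EuclideanSpace.norm_sq_eq, frobSq,
    Finset.sum_mul]
  apply Finset.sum_le_sum
  intro i _
  simp only [Matrix.ofLp_toEuclideanCLM, Real.norm_eq_abs, sq_abs, Matrix.mulVec, dotProduct]
  exact Finset.sum_mul_sq_le_sq_mul_sq _ _ _

lemma inner_toCLM {d : ℕ} (A : Matrix (Fin d) (Fin d) ℝ) (x : Fin d → ℝ) :
    star x ⬝ᵥ (A *ᵥ x) = inner ℝ (WithLp.toLp 2 x : EuclideanSpace ℝ (Fin d))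
      (Matrix.toEuclideanCLM (𝕜 := ℝ) A (WithLp.toLp 2 x)) := by
  rw [Matrix.inner_toEuclideanCLM]
  simp

lemma psd_shift {d : ℕ} (A : Matrix (Fin d) (Fin d) ℝ) (hA : A.IsSymm) :
    (A + frobNorm A • (1 : Matrix (Fin d) (Fin d) ℝ)).PosSemidef := by
  rw [Matrix.posSemidef_iff_dotProduct_mulVec]
  constructor
  · have : Aᵀ = A := hA
    simp [Matrix.IsHermitian, this]
  · intro x
    rw [inner_toCLM]
    set y : EuclideanSpace ℝ (Fin d) := WithLp.toLp 2 x
    have h1 := norm_apply_le_frob A y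
    have h2 := abs_real_inner_le_norm y (Matrix.toEuclideanCLM (𝕜 := ℝ) A y)
    have h3 := neg_le_of_abs_le h2
    simp only [map_add, map_smul, map_one, _root_.add_apply, ContinuousLinearMap.smul_apply,
      ContinuousLinearMap.one_apply, inner_add_right, inner_smul_right, real_inner_self_eq_norm_sq]
    nlinarith [norm_nonneg y]

lemma psd_lower {d : ℕ} (M : Matrix (Fin d) (Fin d) ℝ) (μ : ℝ)
    (h : (M - μ • (1 : Matrix (Fin d) (Fin d) ℝ)).PosSemidef) (x : EuclideanSpace ℝ (Fin d)) :
    μ * ‖x‖ ≤ ‖Matrix.toEuclideanCLM (𝕜 := ℝ) M x‖ := by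
  have h1 := (Matrix.posSemidef_iff_dotProduct_mulVec.1 h).2 x.ofLp
  rw [inner_toCLM] at h1
  simp only [WithLp.toLp_ofLp, map_sub, map_smul, map_one, _root_.sub_apply,
    ContinuousLinearMap.smul_apply,
      ContinuousLinearMap.one_apply, inner_sub_right, inner_smul_right,
      real_inner_self_eq_norm_sq] at h1
  have h2 := real_inner_le_norm x (Matrix.toEuclideanCLM (𝕜 := ℝ) M x)
  rcases (norm_nonneg x).eq_or_lt with h0 | h0
  · rw [← h0]; simp
  · have : ‖x‖ * (μ * ‖x‖) ≤ ‖x‖ * ‖Matrix.toEuclideanCLM (𝕜 := ℝ) M x‖ := by nlinarith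
    exact le_of_mul_le_mul_left this h0

lemma hess_clm {d : ℕ} (f : EuclideanSpace ℝ (Fin d) → ℝ) (x : EuclideanSpace ℝ (Fin d)) :
    Matrix.toEuclideanCLM (𝕜 := ℝ) (hess f x) = fderiv ℝ (gradient f) x := by
  apply ContinuousLinearMap.coe_injective
  apply (EuclideanSpace.basisFun (Fin d) ℝ).toBasis.ext
  intro l
  ext j
  simp [Matrix.ofLp_toEuclideanCLM, hess]

lemma grad_diff {d : ℕ} (f : EuclideanSpace ℝ (Fin d) → ℝ) (hf : ContDiff ℝ 2 f) :
    Differentiable ℝ (gradient f) := by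
  have h1 : Differentiable ℝ (fderiv ℝ f) :=
    (hf.fderiv_right (m := 1) (by norm_num)).differentiable (by norm_num)
  exact (InnerProductSpace.toDual ℝ (EuclideanSpace ℝ (Fin d))).symm.differentiable.comp h1

lemma taylor_grad {d : ℕ} (f : EuclideanSpace ℝ (Fin d) → ℝ) (hf : ContDiff ℝ 2 f) (H : ℝ)
    (hH : ∀ x y, specNorm (hess f x - hess f y) ≤ H * ‖x - y‖)
    (x v : EuclideanSpace ℝ (Fin d)) :
    ‖gradient f (x + v) - gradient f x - Matrix.toEuclideanCLM (𝕜 := ℝ) (hess f x) v‖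
      ≤ H / 2 * ‖v‖ ^ 2 := by
  have hd := grad_diff f hf
  let L := fderiv ℝ (gradient f) x
  let φ : ℝ → EuclideanSpace ℝ (Fin d) := fun t =>
    gradient f (x + t • v) - gradient f x - t • L v
  have hφ : ∀ t, HasDerivAt φ (fderiv ℝ (gradient f) (x + t • v) v - L v) t := by
    intro t
    have ha : HasDerivAt (fun t : ℝ => x + t • v) v t := by
      simpa using ((hasDerivAt_id t).smul_const v).const_add x
    have hb := (hd (x + t • v)).hasFDerivAt.comp_hasDerivAt t ha
    have hc : HasDerivAt (fun t : ℝ => t • L v) (L v) t := by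
      simpa using ((hasDerivAt_id t).smul_const (L v))
    exact (hb.sub_const _).sub hc
  have hB : ∀ t : ℝ, HasDerivAt (fun t : ℝ => H / 2 * ‖v‖ ^ 2 * t ^ 2) (H * ‖v‖ ^ 2 * t) t := by
    intro t
    have := (hasDerivAt_pow 2 t).const_mul (H / 2 * ‖v‖ ^ 2)
    refine this.congr_deriv ?_
    push_cast; ring
  have key := image_norm_le_of_norm_deriv_right_le_deriv_boundary (a := 0) (b := 1)
    (f := φ) (fun t _ => (hφ t).continuousAt.continuousWithinAt)
    (fun t _ => (hφ t).hasDerivWithinAt) (by simp [φ]) hB (by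
      intro t ht
      have h1 := hH (x + t • v) x
      rw [specNorm, map_sub, hess_clm, hess_clm] at h1
      have h2 := (fderiv ℝ (gradient f) (x + t • v) - L).le_opNorm v
      rw [_root_.sub_apply] at h2
      refine h2.trans ((mul_le_mul_of_nonneg_right h1 (norm_nonneg v)).trans (le_of_eq ?_))
      rw [add_sub_cancel_left, norm_smul, Real.norm_of_nonneg ht.1]; ring)
  have := key (Set.right_mem_Icc.2 zero_le_one)
  simpa [φ, L, hess_clm] using this

lemma grad_avg {d n : ℕ} (f : Fin n → EuclideanSpace ℝ (Fin d) → ℝ)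
    (hf : ∀ i, ContDiff ℝ 2 (f i)) (c : ℝ) (x : EuclideanSpace ℝ (Fin d)) :
    gradient (fun x => c * ∑ i, f i x) x = c • ∑ i, gradient (f i) x := by
  apply HasGradientAt.gradient
  rw [hasGradientAt_iff_hasFDerivAt]
  have : ∀ i ∈ Finset.univ, HasFDerivAt (f i) (fderiv ℝ (f i) x) x := fun i _ =>
    ((hf i).differentiable (by norm_num) x).hasFDerivAt
  have h2 := (HasFDerivAt.fun_sum this).const_mul c
  refine h2.congr_fderiv ?_
  rw [map_smulₛₗ, map_sum]
  simp [gradient]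

lemma final_arith (n : ℕ) (H H₁ μ D c : ℝ) (hμ : 0 < μ) (hD : 0 ≤ D) (hc : 0 ≤ c) (r a ζ : Fin n → ℝ)
    (h : μ * D ≤ c * ∑ i, (H / 2 * r i ^ 2 + (2 * a i + H₁ * ζ i) * r i)) :
    D ^ 2 ≤ (3 * H ^ 2 / (4 * μ ^ 2)) * (c * ∑ i, r i ^ 2) ^ 2
        + (12 / μ ^ 2) * (c * ∑ i, a i ^ 2) * (c * ∑ i, r i ^ 2)
        + (3 * H₁ ^ 2 / μ ^ 2) * (c * ∑ i, ζ i ^ 2) * (c * ∑ i, r i ^ 2) := by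
  have e : ∑ i, (H / 2 * r i ^ 2 + (2 * a i + H₁ * ζ i) * r i) =
      H / 2 * ∑ i, r i ^ 2 + 2 * ∑ i, a i * r i + H₁ * ∑ i, ζ i * r i := by
    simp only [Finset.mul_sum, ← Finset.sum_add_distrib]
    exact Finset.sum_congr rfl fun i _ => by ring
  rw [e] at h
  have c1 := Finset.sum_mul_sq_le_sq_mul_sq Finset.univ a r
  have c2 := Finset.sum_mul_sq_le_sq_mul_sq Finset.univ ζ r
  set R := ∑ i, r i ^ 2
  set S := ∑ i, a i * r i
  set T := ∑ i, ζ i * r i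
  set A := ∑ i, a i ^ 2
  set Z := ∑ i, ζ i ^ 2
  have h1 : (μ * D) ^ 2 ≤ (c * (H / 2 * R + 2 * S + H₁ * T)) ^ 2 :=
    pow_le_pow_left₀ (by positivity) h 2
  have h2 : (H / 2 * R + 2 * S + H₁ * T) ^ 2 ≤
      3 * ((H / 2 * R) ^ 2 + (2 * S) ^ 2 + (H₁ * T) ^ 2) := by
    nlinarith [sq_nonneg (H / 2 * R - 2 * S), sq_nonneg (H / 2 * R - H₁ * T),
      sq_nonneg (2 * S - H₁ * T)]
  have h3 : H₁ ^ 2 * T ^ 2 ≤ H₁ ^ 2 * (Z * R) := by gcongr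
  have h4 : (H / 2 * R + 2 * S + H₁ * T) ^ 2 ≤
      3 * (H ^ 2 / 4 * R ^ 2 + 4 * (A * R) + H₁ ^ 2 * (Z * R)) := by nlinarith
  have h5 : μ ^ 2 * D ^ 2 ≤ c ^ 2 * (3 * (H ^ 2 / 4 * R ^ 2 + 4 * (A * R) + H₁ ^ 2 * (Z * R))) := by
    rw [← mul_pow]; refine h1.trans ?_; rw [mul_pow]; gcongr
  have h6 : D ^ 2 ≤ c ^ 2 * (3 * (H ^ 2 / 4 * R ^ 2 + 4 * (A * R) + H₁ ^ 2 * (Z * R))) / μ ^ 2 := by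
    rw [le_div_iff₀ (by positivity)]; linarith
  refine h6.trans (le_of_eq ?_)
  field_simp
  ring

/-- The key deterministic one-step estimate in the analysis of BL2. -/
theorem bl2_one_step_estimate (d n : ℕ) (hn : 1 ≤ n)
    (f : Fin n → EuclideanSpace ℝ (Fin d) → ℝ)
    (hf : ∀ i, ContDiff ℝ 2 (f i))
    (μ : ℝ) (hμ : 0 < μ)
    (hsc : ∀ i x, ((hess (f i) x) - μ • (1 : Matrix (Fin d) (Fin d) ℝ)).PosSemidef)
    (H H₁ : ℝ)
    (hH : ∀ i x y, specNorm (hess (f i) x - hess (f i) y) ≤ H * ‖x - y‖)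
    (hH₁ : ∀ i x y, frobNorm (hess (f i) x - hess (f i) y) ≤ H₁ * ‖x - y‖)
    (fbar : EuclideanSpace ℝ (Fin d) → ℝ)
    (hfbar : fbar = fun x => (1 / (n : ℝ)) * ∑ i, f i x)
    (xstar : EuclideanSpace ℝ (Fin d)) (hstar : gradient fbar xstar = 0)
    (w z : Fin n → EuclideanSpace ℝ (Fin d))
    (P : Fin n → Matrix (Fin d) (Fin d) ℝ) (hP : ∀ i, (P i).IsSymm)
    (l : Fin n → ℝ) (hl : ∀ i, l i = frobNorm (P i - hess (f i) (z i)))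
    (g : Fin n → EuclideanSpace ℝ (Fin d))
    (hg : ∀ i, g i = Matrix.toEuclideanCLM (𝕜 := ℝ)
        (P i + l i • (1 : Matrix (Fin d) (Fin d) ℝ)) (w i) - gradient (f i) (w i))
    (M : Matrix (Fin d) (Fin d) ℝ)
    (hM : M = (1 / (n : ℝ)) • ∑ i, (P i + l i • (1 : Matrix (Fin d) (Fin d) ℝ)))
    (𝒲 𝒵 : ℝ)
    (h𝒲 : 𝒲 = (1 / (n : ℝ)) * ∑ i, ‖w i - xstar‖ ^ 2)
    (h𝒵 : 𝒵 = (1 / (n : ℝ)) * ∑ i, ‖z i - xstar‖ ^ 2) :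
    (M - μ • (1 : Matrix (Fin d) (Fin d) ℝ)).PosSemidef ∧ IsUnit M ∧
    ‖Matrix.toEuclideanCLM (𝕜 := ℝ) M⁻¹ ((1 / (n : ℝ)) • ∑ i, g i) - xstar‖ ^ 2
      ≤ (3 * H ^ 2 / (4 * μ ^ 2)) * 𝒲 ^ 2
        + (12 / μ ^ 2) * ((1 / (n : ℝ)) * ∑ i, frobSq (P i - hess (f i) xstar)) * 𝒲
        + (3 * H₁ ^ 2 / μ ^ 2) * 𝒵 * 𝒲 := by
  have hn0 : (0 : ℝ) < n := by exact_mod_cast hn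
  have hc : (0 : ℝ) ≤ 1 / (n : ℝ) := by positivity
  have hsym : ∀ i x, (hess (f i) x).IsSymm := by
    intro i x
    have h := (hsc i x).isHermitian
    have h2 : (hess (f i) x) = (hess (f i) x - μ • (1 : Matrix (Fin d) (Fin d) ℝ))
      + μ • (1 : Matrix (Fin d) (Fin d) ℝ) := by simp
    have h3 : (hess (f i) x - μ • (1 : Matrix (Fin d) (Fin d) ℝ))ᵀ =
      (hess (f i) x - μ • (1 : Matrix (Fin d) (Fin d) ℝ)) := by
      simpa [Matrix.IsHermitian, Matrix.conjTranspose_eq_transpose_of_trivial] using h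
    rw [Matrix.IsSymm, h2, Matrix.transpose_add, h3]
    simp
  have hpsd : (M - μ • (1 : Matrix (Fin d) (Fin d) ℝ)).PosSemidef := by
    have e : M - μ • (1 : Matrix (Fin d) (Fin d) ℝ) = (1 / (n : ℝ)) •
        ∑ i, (((P i - hess (f i) (z i)) + frobNorm (P i - hess (f i) (z i)) •
          (1 : Matrix (Fin d) (Fin d) ℝ)) + (hess (f i) (z i) - μ • 1)) := by
      have : ∀ i, (((P i - hess (f i) (z i)) + frobNorm (P i - hess (f i) (z i)) •
          (1 : Matrix (Fin d) (Fin d) ℝ)) + (hess (f i) (z i) - μ • 1)) =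
          (P i + l i • (1 : Matrix (Fin d) (Fin d) ℝ)) - μ • 1 := by
        intro i; rw [hl]; abel
      simp only [this]
      rw [Finset.sum_sub_distrib, smul_sub, ← hM]
      congr 1
      rw [Finset.sum_const, Finset.card_univ, Fintype.card_fin, ← Nat.cast_smul_eq_nsmul ℝ, smul_smul,
        one_div, inv_mul_cancel₀ hn0.ne', one_smul]
    rw [e]
    exact (Matrix.posSemidef_sum _ fun i _ =>
      (psd_shift _ ((hP i).sub (hsym i (z i)))).add (hsc i (z i))).smul hc
  have hunit : IsUnit M := by
    have : M.PosDef := by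
      have h1 : (μ • (1 : Matrix (Fin d) (Fin d) ℝ)).PosDef := Matrix.PosDef.one.smul hμ
      simpa using h1.add_posSemidef hpsd
    exact this.isUnit
  refine ⟨hpsd, hunit, ?_⟩
  subst hfbar
  rw [grad_avg f hf] at hstar
  set Φ := Matrix.toEuclideanCLM (n := Fin d) (𝕜 := ℝ) with hΦ
  set xp := Φ M⁻¹ ((1 / (n : ℝ)) • ∑ i, g i) with hxp
  have hMx : Φ M xp = (1 / (n : ℝ)) • ∑ i, g i := by
    rw [hxp, ← ContinuousLinearMap.mul_apply, ← map_mul,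
      Matrix.mul_nonsing_inv _ ((Matrix.isUnit_iff_isUnit_det _).1 hunit), map_one]
    rfl
  have hres : Φ M (xp - xstar) = (1 / (n : ℝ)) • ∑ i,
      (-(gradient (f i) (xstar + (w i - xstar)) - gradient (f i) xstar -
        Φ (hess (f i) xstar) (w i - xstar)) + (Φ (P i - hess (f i) xstar) (w i - xstar)
        + l i • (w i - xstar))) := by
    have e1 : ∀ i, (-(gradient (f i) (xstar + (w i - xstar)) - gradient (f i) xstar -
        Φ (hess (f i) xstar) (w i - xstar)) + (Φ (P i - hess (f i) xstar) (w i - xstar)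
        + l i • (w i - xstar))) = g i - Φ (P i + l i • 1) xstar + gradient (f i) xstar := by
      intro i
      rw [hg]
      simp only [map_add, map_sub, map_smul, map_one, _root_.add_apply, _root_.sub_apply,
        ContinuousLinearMap.smul_apply, ContinuousLinearMap.one_apply, add_sub_cancel, smul_sub]
      abel
    simp only [e1]
    rw [Finset.sum_add_distrib, smul_add, hstar, add_zero, Finset.sum_sub_distrib, smul_sub,
      map_sub, hMx, hM]
    simp only [map_smul, map_sum, ContinuousLinearMap.smul_apply, ContinuousLinearMap.sum_apply]
  have hbound : μ * ‖xp - xstar‖ ≤ (1 / (n : ℝ)) * ∑ i, (H / 2 * ‖w i - xstar‖ ^ 2 +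
      (2 * frobNorm (P i - hess (f i) xstar) + H₁ * ‖z i - xstar‖) * ‖w i - xstar‖) := by
    refine (psd_lower M μ hpsd _).trans ?_
    rw [← hΦ, hres, norm_smul, Real.norm_of_nonneg hc]
    refine mul_le_mul_of_nonneg_left ((norm_sum_le _ _).trans (Finset.sum_le_sum fun i _ => ?_)) hc
    refine (norm_add_le _ _).trans (add_le_add ?_ ?_)
    · rw [norm_neg]
      exact taylor_grad (f i) (hf i) H (hH i) xstar (w i - xstar)
    · refine (norm_add_le _ _).trans ?_
      have b1 := norm_apply_le_frob (P i - hess (f i) xstar) (w i - xstar)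
      have b2 : l i ≤ frobNorm (P i - hess (f i) xstar) + H₁ * ‖z i - xstar‖ := by
        rw [hl]
        have t := frobNorm_triangle (P i - hess (f i) xstar) (hess (f i) xstar - hess (f i) (z i))
        rw [sub_add_sub_cancel] at t
        have t2 := hH₁ i xstar (z i)
        rw [norm_sub_rev] at t2
        linarith
      have b0 : 0 ≤ l i := by rw [hl]; exact frobNorm_nn _
      have b3 := mul_le_mul_of_nonneg_right b2 (norm_nonneg (w i - xstar))
      rw [norm_smul, Real.norm_of_nonneg b0]
      rw [← hΦ] at b1
      linarith
  have := final_arith n H H₁ μ _ _ hμ (norm_nonneg _) hc _ _ _ hbound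
  simp only [frobNorm_pow, ← h𝒲, ← h𝒵] at this
  exact this
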